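/- Assume ν is infinitesimally invariant for N₀, i.e. ∫_H N₀φ dν = 0 for every cylinder function φ. Let M > 0 and let v : H → H be Borel measurable with |v(x)|_H ≤ M for ν-a.e. x. Then for every cylinder function φ and every λ > 0, ∫_H (⟨v, Q^{1/2}Dφ⟩(x))² ν(dx) ≤ −2M² ∫_H φ N₀φ dν ≤ 2M² ( λ^{-1} ∫_H (N₀φ)² dν + λ ∫_H φ² dν ). -/

import Mathlib

open MeasureTheory
open scoped InnerProductSpace BigOperators

/-- The coordinate map `x ↦ (⟪x, e 1⟫, …, ⟪x, e n⟫)` of a cylinder function. -/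
noncomputable def coords {H : Type*} [NormedAddCommGroup H] [InnerProductSpace ℝ H]
    (e : ℕ → H) (n : ℕ) (x : H) : Fin n → ℝ :=
  fun i => ⟪x, e i.1⟫_ℝ

/-- The `i`-th partial derivative of `f : ℝⁿ → ℝ`. -/
noncomputable def pd {n : ℕ} (f : (Fin n → ℝ) → ℝ) (i : Fin n) (y : Fin n → ℝ) : ℝ :=
  fderiv ℝ f y (Pi.single i 1)

/-- The second partial derivative `∂_{ii} f` of `f : ℝⁿ → ℝ`. -/
noncomputable def pd2 {n : ℕ} (f : (Fin n → ℝ) → ℝ) (i : Fin n) (y : Fin n → ℝ) : ℝ :=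
  fderiv ℝ (fun z => pd f i z) y (Pi.single i 1)

/-- `f ∈ C_b²(ℝⁿ)`: twice continuously differentiable with bounded derivatives
up to order 2. -/
def CbTwo {n : ℕ} (f : (Fin n → ℝ) → ℝ) : Prop :=
  ContDiff ℝ 2 f ∧ ∀ k : ℕ, k ≤ 2 → ∃ C : ℝ, ∀ y, ‖iteratedFDeriv ℝ k f y‖ ≤ C

/-- The Kolmogorov operator `N₀` applied to the cylinder function
`φ(x) = f(⟪x,e 1⟫, …, ⟪x,e n⟫)`:
`N₀φ(x) = (1/2) Σ_i q_i ∂_{ii} f + Σ_i a_i(x) ∂_i f`. -/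
noncomputable def KolmN0 {H : Type*} [NormedAddCommGroup H] [InnerProductSpace ℝ H]
    (e : ℕ → H) (q : ℕ → ℝ) (a : ℕ → H → ℝ) {n : ℕ}
    (f : (Fin n → ℝ) → ℝ) (x : H) : ℝ :=
  (1/2) * ∑ i : Fin n, q i.1 * pd2 f i (coords e n x)
    + ∑ i : Fin n, a i.1 x * pd f i (coords e n x)


/-- The perturbation term `⟨v, Q^{1/2}Dφ⟩(x) = Σ_i q_i^{1/2} ⟪v x, e i⟫ ∂_i f`. -/
noncomputable def Pterm {H : Type*} [NormedAddCommGroup H] [InnerProductSpace ℝ H]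
    (e : ℕ → H) (q : ℕ → ℝ) (v : H → H) {n : ℕ}
    (f : (Fin n → ℝ) → ℝ) (x : H) : ℝ :=
  ∑ i : Fin n, Real.sqrt (q i.1) * ⟪v x, e i.1⟫_ℝ * pd f i (coords e n x)

/-! Leibniz' rule for the second-order operator `N₀` reads
`N₀(φψ) = φ N₀ψ + ψ N₀φ + Γ(φ, ψ)`, where `Γ` is the carré du champ. With `ψ = φ`, integrating
against an invariant `ν` gives the energy identity `∫ Γ(φ, φ) dν = -2 ∫ φ N₀φ dν`. The perturbation
is dominated by the energy, since Cauchy–Schwarz and Bessel's inequality yield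
`⟨v, Q^{1/2}Dφ⟩² ≤ |v|² Γ(φ, φ)`; the second bound is Young's inequality. -/

theorem two_mul_abs_integral_mul_le {α : Type*} [MeasurableSpace α] {μ : Measure α}
    {u w : α → ℝ} (hu : MemLp u 2 μ) (hw : MemLp w 2 μ) {ε : ℝ} (hε : 0 < ε) :
    2 * |∫ x, u x * w x ∂μ| ≤ ε * ∫ x, u x ^ 2 ∂μ + ε⁻¹ * ∫ x, w x ^ 2 ∂μ := by
  have hu2 := hu.integrable_sq.const_mul ε
  have hw2 := hw.integrable_sq.const_mul ε⁻¹
  calc 2 * |∫ x, u x * w x ∂μ|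
      ≤ 2 * ∫ x, |u x * w x| ∂μ := by gcongr; exact abs_integral_le_integral_abs
    _ = ∫ x, 2 * |u x * w x| ∂μ := (integral_const_mul _ _).symm
    _ ≤ ∫ x, (ε * u x ^ 2 + ε⁻¹ * w x ^ 2) ∂μ := by
        refine integral_mono ((hu.integrable_mul hw).abs.const_mul 2) (hu2.add hw2) fun x => ?_
        simpa only [abs_mul, sq_abs, mul_assoc] using
          two_mul_le_add_mul_sq (a := |u x|) (b := |w x|) hε
    _ = ε * ∫ x, u x ^ 2 ∂μ + ε⁻¹ * ∫ x, w x ^ 2 ∂μ := by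
        rw [integral_add hu2 hw2, integral_const_mul, integral_const_mul]

section PartialDerivatives

variable {n : ℕ} {f g : (Fin n → ℝ) → ℝ}

theorem contDiff_pd {k m : WithTop ℕ∞} (hf : ContDiff ℝ k f) (hmk : m + 1 ≤ k) (i : Fin n) :
    ContDiff ℝ m (pd f i) :=
  (hf.fderiv_right hmk).clm_apply contDiff_const

theorem continuous_pd2 (hf : ContDiff ℝ 2 f) (i : Fin n) : Continuous (pd2 f i) :=
  (contDiff_pd (contDiff_pd (m := 1) hf le_rfl i) (zero_add 1).le i).continuous

theorem norm_pd_le (f : (Fin n → ℝ) → ℝ) (i : Fin n) (y : Fin n → ℝ) :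
    ‖pd f i y‖ ≤ ‖iteratedFDeriv ℝ 1 f y‖ := by
  rw [norm_iteratedFDeriv_one]
  exact (fderiv ℝ f y).unit_le_opNorm _ (by rw [Pi.norm_single, norm_one])

theorem pd2_eq_iteratedFDeriv (hf : ContDiff ℝ 2 f) (i : Fin n) (y : Fin n → ℝ) :
    pd2 f i y = iteratedFDeriv ℝ 2 f y (fun _ => Pi.single i 1) := by
  have hdf : DifferentiableAt ℝ (fderiv ℝ f) y :=
    (hf.fderiv_right (m := 1) le_rfl).differentiable one_ne_zero y
  rw [iteratedFDeriv_two_apply]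
  unfold pd2 pd
  rw [fderiv_clm_apply hdf (differentiableAt_const _)]
  simp

theorem norm_pd2_le (hf : ContDiff ℝ 2 f) (i : Fin n) (y : Fin n → ℝ) :
    ‖pd2 f i y‖ ≤ ‖iteratedFDeriv ℝ 2 f y‖ := by
  rw [pd2_eq_iteratedFDeriv hf]
  refine (iteratedFDeriv ℝ 2 f y).unit_le_opNorm ((pi_norm_const_le _).trans ?_)
  rw [Pi.norm_single, norm_one]

theorem pd_add {y : Fin n → ℝ} (hf : DifferentiableAt ℝ f y) (hg : DifferentiableAt ℝ g y)
    (i : Fin n) : pd (fun z => f z + g z) i y = pd f i y + pd g i y := by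
  simp only [pd, fderiv_fun_add hf hg, add_apply]

theorem pd_mul {y : Fin n → ℝ} (hf : DifferentiableAt ℝ f y) (hg : DifferentiableAt ℝ g y)
    (i : Fin n) : pd (fun z => f z * g z) i y = f y * pd g i y + g y * pd f i y := by
  simp only [pd, fderiv_fun_mul hf hg, add_apply, smul_apply, smul_eq_mul]

theorem pd_pd (f : (Fin n → ℝ) → ℝ) (i : Fin n) : pd (pd f i) i = pd2 f i :=
  rfl

theorem pd2_mul (hf : ContDiff ℝ 2 f) (hg : ContDiff ℝ 2 g) (i : Fin n) (y : Fin n → ℝ) :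
    pd2 (fun z => f z * g z) i y
      = f y * pd2 g i y + g y * pd2 f i y + 2 * (pd f i y * pd g i y) := by
  have hdf : Differentiable ℝ f := hf.differentiable two_ne_zero
  have hdg : Differentiable ℝ g := hg.differentiable two_ne_zero
  have hdpf : Differentiable ℝ (pd f i) :=
    (contDiff_pd (m := 1) hf le_rfl i).differentiable one_ne_zero
  have hdpg : Differentiable ℝ (pd g i) :=
    (contDiff_pd (m := 1) hg le_rfl i).differentiable one_ne_zero
  have hpd : pd (fun z => f z * g z) i = fun z => f z * pd g i z + g z * pd f i z :=
    funext fun z => pd_mul (hdf z) (hdg z) i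
  calc pd2 (fun z => f z * g z) i y
      = pd (fun z => f z * pd g i z + g z * pd f i z) i y := by rw [← pd_pd, hpd]
    _ = (f y * pd (pd g i) i y + pd g i y * pd f i y)
          + (g y * pd (pd f i) i y + pd f i y * pd g i y) := by
        rw [pd_add ((hdf y).fun_mul (hdpg y)) ((hdg y).fun_mul (hdpf y)),
          pd_mul (hdf y) (hdpg y), pd_mul (hdg y) (hdpf y)]
    _ = f y * pd2 g i y + g y * pd2 f i y + 2 * (pd f i y * pd g i y) := by
        rw [pd_pd, pd_pd]
        ring

end PartialDerivatives

namespace CbTwo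

variable {n : ℕ} {f g : (Fin n → ℝ) → ℝ}

theorem exists_norm_le (hf : CbTwo f) : ∃ C, ∀ y, ‖f y‖ ≤ C := by
  simpa only [norm_iteratedFDeriv_zero] using hf.2 0 zero_le_two

theorem exists_norm_pd_le (hf : CbTwo f) (i : Fin n) : ∃ C, ∀ y, ‖pd f i y‖ ≤ C :=
  (hf.2 1 one_le_two).imp fun _ hC y => (norm_pd_le f i y).trans (hC y)

theorem exists_norm_pd2_le (hf : CbTwo f) (i : Fin n) : ∃ C, ∀ y, ‖pd2 f i y‖ ≤ C :=
  (hf.2 2 le_rfl).imp fun _ hC y => (norm_pd2_le hf.1 i y).trans (hC y)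

theorem mul (hf : CbTwo f) (hg : CbTwo g) : CbTwo (fun y => f y * g y) := by
  refine ⟨hf.1.mul hg.1, fun k hk => ?_⟩
  choose! A hA using hf.2
  choose! B hB using hg.2
  refine ⟨∑ j ∈ Finset.range (k + 1), (k.choose j : ℝ) * A j * B (k - j), fun y => ?_⟩
  refine (norm_iteratedFDeriv_mul_le hf.1 hg.1 y (by exact_mod_cast hk)).trans
    (Finset.sum_le_sum fun j hj => ?_)
  have hfj := hA j ((Finset.mem_range_succ_iff.1 hj).trans hk) y
  have hgj := hB (k - j) ((Nat.sub_le k j).trans hk) y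
  have hAj : 0 ≤ A j := (norm_nonneg _).trans hfj
  gcongr

end CbTwo

section CarreDuChamp

variable {H : Type*} [NormedAddCommGroup H] [InnerProductSpace ℝ H] {e : ℕ → H} {n : ℕ}
  {f g : (Fin n → ℝ) → ℝ}

/-- The carré du champ `⟪Q^{1/2}Dφ, Q^{1/2}Dψ⟫` of the cylinder functions `φ`, `ψ` given by
`f`, `g`. The squared norm `|Q^{1/2}Dφ|²` is its value at `g = f`. -/
noncomputable def carreDuChamp (e : ℕ → H) (q : ℕ → ℝ) (f g : (Fin n → ℝ) → ℝ) (x : H) : ℝ :=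
  ∑ i : Fin n, q i.1 * (pd f i (coords e n x) * pd g i (coords e n x))

theorem KolmN0_mul (e : ℕ → H) (q : ℕ → ℝ) (a : ℕ → H → ℝ) (hf : ContDiff ℝ 2 f)
    (hg : ContDiff ℝ 2 g) (x : H) :
    KolmN0 e q a (fun y => f y * g y) x
      = f (coords e n x) * KolmN0 e q a g x + g (coords e n x) * KolmN0 e q a f x
        + carreDuChamp e q f g x := by
  simp only [KolmN0, carreDuChamp, pd2_mul hf hg, Finset.mul_sum,
    pd_mul (hf.differentiable two_ne_zero _) (hg.differentiable two_ne_zero _), mul_add,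
    ← Finset.sum_add_distrib]
  exact Finset.sum_congr rfl fun i _ => by ring

theorem Pterm_sq_le (he : Orthonormal ℝ e) {q : ℕ → ℝ} (hq : ∀ i, 0 ≤ q i) (v : H → H)
    (f : (Fin n → ℝ) → ℝ) (x : H) :
    Pterm e q v f x ^ 2 ≤ ‖v x‖ ^ 2 * carreDuChamp e q f f x := by
  set gradient : Fin n → ℝ := fun i => √(q i.1) * pd f i (coords e n x) with hgradient
  have hPterm : Pterm e q v f x = ∑ i : Fin n, ⟪v x, e i.1⟫_ℝ * gradient i :=
    Finset.sum_congr rfl fun i _ => by ring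
  have hcarre : carreDuChamp e q f f x = ∑ i : Fin n, gradient i ^ 2 :=
    Finset.sum_congr rfl fun i _ => by rw [hgradient, mul_pow, Real.sq_sqrt (hq i), sq (pd f i _)]
  have bessel : ∑ i : Fin n, ⟪v x, e i.1⟫_ℝ ^ 2 ≤ ‖v x‖ ^ 2 := by
    simpa only [Function.comp_apply, Real.norm_eq_abs, sq_abs, real_inner_comm] using
      (he.comp _ Fin.val_injective).sum_inner_products_le (v x) (s := Finset.univ)
  calc Pterm e q v f x ^ 2
      ≤ (∑ i : Fin n, ⟪v x, e i.1⟫_ℝ ^ 2) * ∑ i : Fin n, gradient i ^ 2 :=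
        hPterm ▸ Finset.sum_mul_sq_le_sq_mul_sq _ _ _
    _ ≤ ‖v x‖ ^ 2 * carreDuChamp e q f f x := by
        rw [hcarre]
        gcongr

end CarreDuChamp

section Integrability

variable {H : Type*} [NormedAddCommGroup H] [InnerProductSpace ℝ H]

theorem continuous_coords (e : ℕ → H) (n : ℕ) : Continuous (coords e n) :=
  continuous_pi fun _ => continuous_id.inner continuous_const

variable [MeasurableSpace H] [OpensMeasurableSpace H] {ν : Measure H} [IsFiniteMeasure ν]
  {e : ℕ → H} {q : ℕ → ℝ} {a : ℕ → H → ℝ} {n : ℕ} {f g : (Fin n → ℝ) → ℝ} {p : ENNReal}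

theorem memLp_comp_coords (hf : Continuous f) (hbdd : ∃ C, ∀ y, ‖f y‖ ≤ C) :
    MemLp (fun x => f (coords e n x)) p ν :=
  let ⟨C, hC⟩ := hbdd
  .of_bound (hf.measurable.comp (continuous_coords e n).measurable).aestronglyMeasurable C
    (.of_forall fun _ => hC _)

namespace CbTwo

theorem memLp (hf : CbTwo f) : MemLp (fun x => f (coords e n x)) p ν :=
  memLp_comp_coords hf.1.continuous hf.exists_norm_le

theorem memLp_pd (hf : CbTwo f) (i : Fin n) : MemLp (fun x => pd f i (coords e n x)) p ν :=
  memLp_comp_coords (contDiff_pd (m := 1) hf.1 le_rfl i).continuous (hf.exists_norm_pd_le i)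

theorem memLp_pd2 (hf : CbTwo f) (i : Fin n) : MemLp (fun x => pd2 f i (coords e n x)) p ν :=
  memLp_comp_coords (continuous_pd2 hf.1 i) (hf.exists_norm_pd2_le i)

theorem memLp_mul_pd (hf : CbTwo f) {b : H → ℝ} (hb : MemLp b p ν) (i : Fin n) :
    MemLp (fun x => b x * pd f i (coords e n x)) p ν :=
  MemLp.mul' (p := p) (q := ⊤) (hf.memLp_pd i) hb

theorem memLp_KolmN0 (hf : CbTwo f) (ha : ∀ i, MemLp (a i) p ν) :
    MemLp (KolmN0 e q a f) p ν :=
  ((memLp_finsetSum _ fun i _ => (hf.memLp_pd2 i).const_mul _).const_mul _).add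
    (memLp_finsetSum _ fun i _ => hf.memLp_mul_pd (ha i) i)

theorem memLp_Pterm (hf : CbTwo f) {v : H → H} (hv : MemLp v p ν) :
    MemLp (Pterm e q v f) p ν :=
  memLp_finsetSum _ fun i _ => hf.memLp_mul_pd ((hv.inner_const _).const_mul _) i

theorem integrable_carreDuChamp (hf : CbTwo f) (hg : CbTwo g) :
    Integrable (carreDuChamp e q f g) ν :=
  integrable_finsetSum _ fun i _ =>
    (MemLp.integrable_mul (p := 2) (q := 2) (hf.memLp_pd i) (hg.memLp_pd i)).const_mul _

theorem integrable_mul_KolmN0 (hf : CbTwo f) (hg : CbTwo g) (ha : ∀ i, MemLp (a i) 2 ν) :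
    Integrable (fun x => f (coords e n x) * KolmN0 e q a g x) ν :=
  MemLp.integrable_mul (p := 2) (q := 2) hf.memLp (hg.memLp_KolmN0 ha)

theorem integral_KolmN0_mul (hf : CbTwo f) (hg : CbTwo g) (ha : ∀ i, MemLp (a i) 2 ν) :
    ∫ x, KolmN0 e q a (fun y => f y * g y) x ∂ν
      = ∫ x, f (coords e n x) * KolmN0 e q a g x ∂ν
        + ∫ x, g (coords e n x) * KolmN0 e q a f x ∂ν + ∫ x, carreDuChamp e q f g x ∂ν := by
  have hfg := hf.integrable_mul_KolmN0 (e := e) (q := q) hg ha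
  have hgf := hg.integrable_mul_KolmN0 (e := e) (q := q) hf ha
  simp only [KolmN0_mul e q a hf.1 hg.1]
  rw [integral_add (hfg.fun_add hgf) (hf.integrable_carreDuChamp hg), integral_add hfg hgf]

theorem integral_Pterm_sq_le (hf : CbTwo f) (he : Orthonormal ℝ e) (hq : ∀ i, 0 ≤ q i)
    {v : H → H} (hv : AEStronglyMeasurable v ν) {M : ℝ} (hvbdd : ∀ᵐ x ∂ν, ‖v x‖ ≤ M) :
    ∫ x, Pterm e q v f x ^ 2 ∂ν ≤ M ^ 2 * ∫ x, carreDuChamp e q f f x ∂ν := by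
  rw [← integral_const_mul]
  refine integral_mono_ae (hf.memLp_Pterm (.of_bound hv M hvbdd)).integrable_sq
    ((hf.integrable_carreDuChamp hf).const_mul _) ?_
  filter_upwards [hvbdd] with x hx
  have hcarre : 0 ≤ carreDuChamp e q f f x :=
    Finset.sum_nonneg fun i _ => mul_nonneg (hq i) (mul_self_nonneg _)
  exact (Pterm_sq_le he hq v f x).trans (by gcongr)

end CbTwo

end Integrability

theorem perturbation_estimate_general
    {H : Type*} [NormedAddCommGroup H] [InnerProductSpace ℝ H]
    [MeasurableSpace H] [OpensMeasurableSpace H]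
    (ν : Measure H) [IsFiniteMeasure ν]
    {e : ℕ → H} (he : Orthonormal ℝ e)
    {q : ℕ → ℝ} (hq : ∀ i, 0 ≤ q i)
    {a : ℕ → H → ℝ} (ha : ∀ i, MemLp (a i) 2 ν)
    {M : ℝ} {v : H → H} (hv : AEStronglyMeasurable v ν) (hvbdd : ∀ᵐ x ∂ν, ‖v x‖ ≤ M)
    {n : ℕ} {f : (Fin n → ℝ) → ℝ} (hf : CbTwo f)
    (hsub : ∫ x, KolmN0 e q a (fun y => f y * f y) x ∂ν ≤ 0)
    {lam : ℝ} (hlam : 0 < lam) :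
    (∫ x, (Pterm e q v f x) ^ 2 ∂ν
        ≤ -(2 * M ^ 2) * ∫ x, f (coords e n x) * KolmN0 e q a f x ∂ν) ∧
    (-(2 * M ^ 2) * ∫ x, f (coords e n x) * KolmN0 e q a f x ∂ν
        ≤ 2 * M ^ 2 * (lam⁻¹ * ∫ x, (KolmN0 e q a f x) ^ 2 ∂ν
            + lam * ∫ x, (f (coords e n x)) ^ 2 ∂ν)) := by
  set I := ∫ x, f (coords e n x) * KolmN0 e q a f x ∂ν
  constructor
  · have henergy : ∫ x, carreDuChamp e q f f x ∂ν ≤ -2 * I := by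
      linarith [hf.integral_KolmN0_mul (e := e) (q := q) hf ha]
    calc ∫ x, (Pterm e q v f x) ^ 2 ∂ν
        ≤ M ^ 2 * ∫ x, carreDuChamp e q f f x ∂ν := hf.integral_Pterm_sq_le he hq hv hvbdd
      _ ≤ M ^ 2 * (-2 * I) := by gcongr
      _ = -(2 * M ^ 2) * I := by ring
  · have hyoung := two_mul_abs_integral_mul_le (hf.memLp (e := e))
      (hf.memLp_KolmN0 (e := e) (q := q) ha) hlam
    calc -(2 * M ^ 2) * I = 2 * M ^ 2 * -I := by ring
      _ ≤ _ := by
        gcongr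
        linarith [neg_abs_le I, abs_nonneg I]

/-- If `ν` is infinitesimally invariant for `N₀` and `v` is a bounded Borel
vector field, then for every cylinder function `φ` and every `λ > 0`,
`∫ ⟨v, Q^{1/2}Dφ⟩² dν ≤ −2M² ∫ φ N₀φ dν ≤ 2M² (λ⁻¹ ∫ (N₀φ)² dν + λ ∫ φ² dν)`. -/
theorem perturbation_estimate
    {H : Type*} [NormedAddCommGroup H] [InnerProductSpace ℝ H]
    [MeasurableSpace H] [BorelSpace H] [SecondCountableTopology H]
    (ν : Measure H) [IsProbabilityMeasure ν]
    (e : ℕ → H) (he : Orthonormal ℝ e)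
    (q : ℕ → ℝ) (hq : ∀ i, 0 < q i)
    (a : ℕ → H → ℝ) (ha : ∀ i, Measurable (a i))
    (ha2 : ∀ i, Integrable (fun x => (a i x) ^ 2) ν)
    (hinv : ∀ (n : ℕ), 1 ≤ n → ∀ f : (Fin n → ℝ) → ℝ, CbTwo f →
      ∫ x, KolmN0 e q a f x ∂ν = 0)
    (M : ℝ) (hM : 0 < M)
    (v : H → H) (hv : Measurable v) (hvbdd : ∀ᵐ x ∂ν, ‖v x‖ ≤ M)
    (n : ℕ) (hn : 1 ≤ n) (f : (Fin n → ℝ) → ℝ) (hf : CbTwo f)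
    (lam : ℝ) (hlam : 0 < lam) :
    (∫ x, (Pterm e q v f x) ^ 2 ∂ν
        ≤ -(2 * M ^ 2) * ∫ x, f (coords e n x) * KolmN0 e q a f x ∂ν) ∧
    (-(2 * M ^ 2) * ∫ x, f (coords e n x) * KolmN0 e q a f x ∂ν
        ≤ 2 * M ^ 2 * (lam⁻¹ * ∫ x, (KolmN0 e q a f x) ^ 2 ∂ν
            + lam * ∫ x, (f (coords e n x)) ^ 2 ∂ν)) := by
  exact perturbation_estimate_general ν he (fun i => (hq i).le)
    (fun i => (memLp_two_iff_integrable_sq (ha i).aestronglyMeasurable).2 (ha2 i))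
    hv.aestronglyMeasurable hvbdd hf (hinv n hn _ (hf.mul hf)).le hlam
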